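/- The Dougall bilateral ${}_5H_5$ formula: for complex parameters $b_1,b_2,b_3,b_4$ and $\theta$ with $\mathrm{Re}(b_1+b_2+b_3+b_4) > 3$ and $\theta$ not an integer, $\sum_{k=-\infty}^{\infty} \frac{k+\theta}{\prod_{\alpha=1}^{4} \Gamma(b_\alpha + \theta + k)\, \Gamma(b_\alpha - \theta - k)} = \frac{\sin 2\pi\theta}{2\pi} \cdot \frac{\Gamma(b_1+b_2+b_3+b_4-3)}{\prod_{1 \le \alpha < \beta \le 4} \Gamma(b_\alpha + b_\beta - 1)}$. -/

import Mathlib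

open Complex Real

open Filter Topology Asymptotics

/-- reciprocal Gamma -/
noncomputable def rG (z : ℂ) : ℂ := (Complex.Gamma z)⁻¹

lemma rG_rec (z : ℂ) : rG z = z * rG (z + 1) := 
  Complex.one_div_Gamma_eq_self_mul_one_div_Gamma_add_one z

lemma rG_ne {z : ℂ} (hz : 0 < z.re) : rG z ≠ 0 :=
  inv_ne_zero (Complex.Gamma_ne_zero_of_re_pos hz)

lemma rG_prod (z : ℂ) (m : ℕ) : rG z = (∏ j ∈ Finset.range m, (z + j)) * rG (z + m) := by
  induction m with
  | zero => simp
  | succ m ih =>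
    rw [ih, Finset.prod_range_succ, rG_rec (z + m)]
    push_cast
    rw [← add_assoc]; ring

/-- normalized reciprocal Gamma along the naturals -/
noncomputable def aA (z : ℂ) (n : ℕ) : ℂ := (n.factorial : ℂ) * (n : ℂ) ^ (z - 1) * rG (z + n)

lemma tendsto_lin (z : ℂ) : Tendsto (fun n : ℕ => (z + n) / (n : ℂ)) atTop (𝓝 1) := by
  have h1 : Tendsto (fun n : ℕ => z / (n : ℂ) + 1) atTop (𝓝 (0 + 1)) :=
    (tendsto_const_div_atTop_nhds_zero_nat z).add tendsto_const_nhds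
  rw [zero_add] at h1
  refine h1.congr' ?_
  filter_upwards [eventually_ne_atTop 0] with n hn
  have : (n : ℂ) ≠ 0 := by exact_mod_cast hn
  field_simp

lemma aA_step (z : ℂ) {n : ℕ} (hn : n ≠ 0) : aA z n = aA (z + 1) n * ((z + n) / n) := by
  have h : (n : ℂ) ≠ 0 := by exact_mod_cast hn
  unfold aA
  rw [rG_rec (z + n), Complex.cpow_sub _ _ h, Complex.cpow_one, add_sub_cancel_right,
    show z + 1 + (n : ℂ) = z + n + 1 by ring]
  field_simp

lemma aA_tendsto_pos (z : ℂ) (hz : 0 < z.re) : Tendsto (aA z) atTop (𝓝 1) := by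
  have hG := Complex.Gamma_ne_zero_of_re_pos hz
  have h1 := ((Complex.GammaSeq_tendsto_Gamma z).div_const (Complex.Gamma z)).mul (tendsto_lin z)
  rw [div_self hG, one_mul] at h1
  refine h1.congr' ?_
  filter_upwards [eventually_ne_atTop 0] with n hn
  have h : (n : ℂ) ≠ 0 := by exact_mod_cast hn
  have hp := rG_prod z (n + 1)
  have hr : rG z ≠ 0 := rG_ne hz
  have hpr : (∏ j ∈ Finset.range (n + 1), (z + j)) ≠ 0 := by
    intro h0; rw [h0, zero_mul] at hp; exact hr hp
  unfold Complex.GammaSeq aA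
  rw [rG_rec (z + n), Complex.cpow_sub _ _ h, Complex.cpow_one]
  have h3 : rG (z + n + 1) = (Complex.Gamma z)⁻¹ / (∏ j ∈ Finset.range (n + 1), (z + j)) := by
    rw [eq_div_iff hpr, mul_comm]
    push_cast at hp
    rw [← add_assoc] at hp
    rw [← hp]; rfl
  rw [h3]
  field_simp

lemma aA_tendsto (z : ℂ) : Tendsto (aA z) atTop (𝓝 1) := by
  obtain ⟨m, hm⟩ := exists_nat_gt (-z.re)
  have key : ∀ m : ℕ, ∀ z : ℂ, 0 < z.re + m → Tendsto (aA z) atTop (𝓝 1) := by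
    intro m
    induction m with
    | zero => intro z hz; exact aA_tendsto_pos z (by simpa using hz)
    | succ m ih =>
      intro z hz
      have h1 := (ih (z + 1) (by push_cast at hz; simp; linarith)).mul (tendsto_lin z)
      rw [one_mul] at h1
      refine h1.congr' ?_
      filter_upwards [eventually_ne_atTop 0] with n hn
      exact (aA_step z hn).symm
  exact key m z (by linarith)

/-- decay of order `p` of a bilateral sequence -/
def Dec (p : ℝ) (f : ℤ → ℂ) : Prop :=
  (fun n : ℕ => f n) =O[atTop] (fun n : ℕ => (n : ℝ) ^ p) ∧
  (fun n : ℕ => f (-(n : ℤ))) =O[atTop] (fun n : ℕ => (n : ℝ) ^ p)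

lemma isBigO_rpow_mul {f g : ℕ → ℂ} {p q : ℝ} (hf : f =O[atTop] (fun n : ℕ => (n : ℝ) ^ p))
    (hg : g =O[atTop] (fun n : ℕ => (n : ℝ) ^ q)) :
    (fun n => f n * g n) =O[atTop] (fun n : ℕ => (n : ℝ) ^ (p + q)) := by
  refine (hf.mul hg).congr' EventuallyEq.rfl ?_
  filter_upwards [eventually_gt_atTop 0] with n hn
  rw [Real.rpow_add (by exact_mod_cast hn)]

lemma Dec.mul {f g : ℤ → ℂ} {p q : ℝ} (hf : Dec p f) (hg : Dec q g) :
    Dec (p + q) (fun k => f k * g k) :=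
  ⟨isBigO_rpow_mul hf.1 hg.1, isBigO_rpow_mul hf.2 hg.2⟩

lemma Dec.summable {f : ℤ → ℂ} {p : ℝ} (hf : Dec p f) (hp : p < -1) : Summable f :=
  Summable.of_nat_of_neg
    (summable_of_isBigO_nat (Real.summable_nat_rpow.mpr hp) hf.1)
    (summable_of_isBigO_nat (Real.summable_nat_rpow.mpr hp) hf.2)

lemma lin_isBigO (θ : ℂ) : (fun n : ℕ => (n : ℂ) + θ) =O[atTop] (fun n : ℕ => (n : ℝ) ^ (1 : ℝ)) := by
  simp only [Real.rpow_one]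
  refine IsBigO.of_bound (1 + ‖θ‖) ?_
  filter_upwards [eventually_ge_atTop 1] with n hn
  have hn' : (1 : ℝ) ≤ n := by exact_mod_cast hn
  have := norm_add_le (n : ℂ) θ
  rw [Complex.norm_natCast] at this
  rw [Real.norm_natCast]
  nlinarith [norm_nonneg θ]

lemma Dec_lin (θ : ℂ) : Dec 1 (fun k => (k : ℂ) + θ) := by
  refine ⟨by simpa using lin_isBigO θ, ?_⟩
  refine (lin_isBigO (-θ)).neg_left.congr_left ?_
  intro n; push_cast; ring

lemma powA_isBigO (A : ℕ) :
    (fun n : ℕ => (1 + (n : ℂ)) ^ A) =O[atTop] (fun n : ℕ => (n : ℝ) ^ (A : ℝ)) := by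
  have h := (lin_isBigO 1).pow A
  simp only [Real.rpow_one] at h
  refine (h.congr_left ?_).congr_right ?_
  · intro n; rw [add_comm]
  · intro n; rw [Real.rpow_natCast]

lemma Dec_pow (A : ℕ) : Dec A (fun k => (1 + (k.natAbs : ℂ)) ^ A) := by
  refine ⟨by simpa using powA_isBigO A, by simpa using powA_isBigO A⟩

lemma norm_sin_sub_nat (q : ℂ) (n : ℕ) :
    ‖Complex.sin ((π : ℂ) * (q - n))‖ = ‖Complex.sin (π * q)‖ := by
  rw [mul_sub, mul_comm (π : ℂ) (n : ℂ), Complex.sin_antiperiodic.sub_nat_mul_eq n]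
  simp

lemma rG_pair_isBigO (p q : ℂ) :
    (fun n : ℕ => rG (p + n) * rG (q - n)) =O[atTop]
      (fun n : ℕ => (n : ℝ) ^ (1 - (p + q).re)) := by
  have h1 : Tendsto (fun n => aA p n / aA (1 - q) n) atTop (𝓝 (1 / 1)) :=
    (aA_tendsto p).div (aA_tendsto (1 - q)) one_ne_zero
  have h2 := (h1.isBigO_one ℝ)
  have h3 := h2.norm_left.mul (isBigO_refl (fun n : ℕ => (n : ℝ) ^ (1 - (p + q).re)) atTop)
  have h4 := h3.const_mul_left (‖Complex.sin (π * q) / π‖)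
  simp only [one_mul] at h4
  refine IsBigO.trans (IsBigO.of_bound 1 ?_) h4
  filter_upwards [eventually_gt_atTop 0, (aA_tendsto (1 - q)).eventually_ne one_ne_zero] with n hn hne
  have hn0 : (n : ℂ) ≠ 0 := by exact_mod_cast hn.ne'
  have hnr : (0 : ℝ) < n := by exact_mod_cast hn
  have hr : rG (1 - q + n) ≠ 0 := by
    intro h0; apply hne; simp [aA, h0]
  have hrefl := Complex.Gamma_mul_Gamma_one_sub (q - n)
  rw [show 1 - (q - n) = 1 - q + (n : ℂ) by ring] at hrefl
  have hrefl2 : rG (q - n) * rG (1 - q + n) = Complex.sin (π * (q - n)) / π := by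
    unfold rG; rw [← mul_inv, hrefl, inv_div]
  have e1 : rG (q - n) = Complex.sin (π * (q - n)) / π / rG (1 - q + n) := by
    rw [← hrefl2]; field_simp
  have hf : (n.factorial : ℂ) ≠ 0 := by exact_mod_cast n.factorial_ne_zero
  have hc : ∀ s : ℂ, (n : ℂ) ^ s ≠ 0 := fun s => by simp [Complex.cpow_eq_zero_iff, hn0]
  have e2 : aA p n / aA (1 - q) n = (n : ℂ) ^ (p + q - 1) * (rG (p + n) / rG (1 - q + n)) := by
    unfold aA
    rw [show p - 1 = (p + q - 1) + ((1 - q) - 1) by ring, Complex.cpow_add _ _ hn0]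
    have h1' := hc (1 - q - 1)
    generalize (n : ℂ) ^ (1 - q - 1) = u at *
    generalize (n : ℂ) ^ (p + q - 1) = v at *
    field_simp
  rw [e2, e1]
  simp only [norm_mul, norm_div, norm_norm, one_mul]
  rw [norm_sin_sub_nat, Complex.norm_natCast_cpow_of_pos hn, Real.norm_of_nonneg (Real.rpow_nonneg hnr.le _)]
  rw [show (n : ℝ) ^ (1 - (p + q).re) = ((n : ℝ) ^ (p + q - 1).re)⁻¹ by
    rw [← Real.rpow_neg hnr.le]; congr 1; simp]
  have : (n : ℝ) ^ (p + q - 1).re ≠ 0 := (Real.rpow_pos_of_pos hnr _).ne'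
  apply le_of_eq
  field_simp

lemma Dec_pair (p q : ℂ) : Dec (1 - (p + q).re) (fun k => rG (p + k) * rG (q - k)) := by
  refine ⟨by simpa using rG_pair_isBigO p q, ?_⟩
  have h := rG_pair_isBigO q p
  rw [add_comm q p] at h
  refine h.congr_left ?_
  intro n; push_cast
  rw [sub_neg_eq_add, ← sub_eq_add_neg, mul_comm]

lemma Dec.congr_exp {f : ℤ → ℂ} {p q : ℝ} (hf : Dec p f) (h : p = q) : Dec q f := h ▸ hf

lemma Dec.tendsto {f : ℤ → ℂ} {p : ℝ} (hf : Dec p f) (hp : p < 0) :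
    Tendsto (fun n : ℕ => f n) atTop (𝓝 0) ∧ Tendsto (fun n : ℕ => f (-(n : ℤ))) atTop (𝓝 0) := by
  have h : Tendsto (fun n : ℕ => (n : ℝ) ^ p) atTop (𝓝 0) := by
    have := (tendsto_rpow_neg_atTop (neg_pos.mpr hp)).comp (tendsto_natCast_atTop_atTop (R := ℝ))
    simpa [Function.comp_def] using this
  exact ⟨hf.1.trans_tendsto h, hf.2.trans_tendsto h⟩

lemma tsum_telescope (G : ℤ → ℂ) {p : ℝ} (hG : Dec p G) (hp : p < 0)
    (hs : Summable (fun k : ℤ => G (k + 1) - G k)) : ∑' k : ℤ, (G (k + 1) - G k) = 0 := by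
  obtain ⟨h1, h2⟩ := hG.tendsto hp
  have i1 : Function.Injective (fun n : ℕ => (n : ℤ)) := fun a b h => by simpa using h
  have i2 : Function.Injective (fun n : ℕ => (-(n + 1 : ℤ))) := fun a b h => by simpa using h
  have s1 := (hs.comp_injective i1).hasSum
  have s2 := (hs.comp_injective i2).hasSum
  have t1 : HasSum (fun n : ℕ => G ((n : ℤ) + 1) - G n) (-G 0) := by
    suffices e : ∑' b, ((fun k : ℤ => G (k + 1) - G k) ∘ (fun n : ℕ => (n : ℤ))) b = -G 0 by
      rw [e] at s1; exact s1
    refine Eq.symm ?_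
    refine tendsto_nhds_unique ?_ s1.tendsto_sum_nat
    have : ∀ n : ℕ, ∑ i ∈ Finset.range n, ((fun k : ℤ => G (k + 1) - G k) ∘ (fun n : ℕ => (n : ℤ))) i
        = G n - G 0 := by
      intro n
      have := Finset.sum_range_sub (fun n : ℕ => G n) n
      simpa using this
    simp only [this]
    simpa using h1.sub_const (G 0)
  have t2 : HasSum (fun n : ℕ => G (-((n : ℤ) + 1) + 1) - G (-((n : ℤ) + 1))) (G 0) := by
    suffices e : ∑' b, ((fun k : ℤ => G (k + 1) - G k) ∘ (fun n : ℕ => (-(n + 1 : ℤ)))) b = G 0 by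
      rw [e] at s2; exact s2
    refine Eq.symm ?_
    refine tendsto_nhds_unique ?_ s2.tendsto_sum_nat
    have : ∀ n : ℕ, ∑ i ∈ Finset.range n,
        ((fun k : ℤ => G (k + 1) - G k) ∘ (fun n : ℕ => (-(n + 1 : ℤ)))) i
        = G 0 - G (-(n : ℤ)) := by
      intro n
      have := Finset.sum_range_sub' (fun n : ℕ => G (-(n : ℤ))) n
      simpa using this
    simp only [this]
    simpa using h2.const_sub (G 0)
  have := HasSum.of_nat_of_neg_add_one (f := fun k : ℤ => G (k + 1) - G k) t1 t2
  rw [this.tsum_eq]; ring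

noncomputable def vv (b θ : ℂ) (k : ℤ) : ℂ := rG (b + θ + k) * rG (b - θ - k)

noncomputable def T3 (b₂ b₃ b₄ θ : ℂ) (k : ℤ) : ℂ :=
  ((k : ℂ) + θ) * (vv b₂ θ k * vv b₃ θ k * vv b₄ θ k)

noncomputable def TT (b₁ b₂ b₃ b₄ θ : ℂ) (k : ℤ) : ℂ := vv b₁ θ k * T3 b₂ b₃ b₄ θ k

noncomputable def S3 (b₂ b₃ b₄ θ : ℂ) : ℂ := ∑' k : ℤ, T3 b₂ b₃ b₄ θ k

noncomputable def SS (b₁ b₂ b₃ b₄ θ : ℂ) : ℂ := ∑' k : ℤ, TT b₁ b₂ b₃ b₄ θ k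

noncomputable def F3 (b₂ b₃ b₄ : ℂ) : ℂ := rG (b₂ + b₃ - 1) * rG (b₂ + b₄ - 1) * rG (b₃ + b₄ - 1)

noncomputable def FF (b₁ b₂ b₃ b₄ : ℂ) : ℂ :=
  Complex.Gamma (b₁ + b₂ + b₃ + b₄ - 3) *
    (rG (b₁ + b₂ - 1) * rG (b₁ + b₃ - 1) * rG (b₁ + b₄ - 1)) * F3 b₂ b₃ b₄

lemma Dec_vv (b θ : ℂ) : Dec (1 - 2 * b.re) (vv b θ) := by
  refine (Dec_pair (b + θ) (b - θ)).congr_exp ?_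
  simp; ring

lemma Dec_T3 (b₂ b₃ b₄ θ : ℂ) : Dec (4 - 2 * (b₂ + b₃ + b₄).re) (T3 b₂ b₃ b₄ θ) := by
  refine ((Dec_lin θ).mul (((Dec_vv b₂ θ).mul (Dec_vv b₃ θ)).mul (Dec_vv b₄ θ))).congr_exp ?_
  simp; ring

lemma Dec_TT (b₁ b₂ b₃ b₄ θ : ℂ) : Dec (5 - 2 * (b₁ + b₂ + b₃ + b₄).re) (TT b₁ b₂ b₃ b₄ θ) := by
  refine ((Dec_vv b₁ θ).mul (Dec_T3 b₂ b₃ b₄ θ)).congr_exp ?_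
  simp; ring

lemma summable_TT (b₁ b₂ b₃ b₄ θ : ℂ) (h : 3 < (b₁ + b₂ + b₃ + b₄).re) :
    Summable (TT b₁ b₂ b₃ b₄ θ) := (Dec_TT b₁ b₂ b₃ b₄ θ).summable (by linarith)

noncomputable def GG (b₁ b₂ b₃ b₄ θ : ℂ) (k : ℤ) : ℂ :=
  (rG (b₁ + θ + k) * rG (b₁ + 1 - θ - k)) *
    ((rG (b₂ - 1 + θ + k) * rG (b₂ - θ - k)) * (rG (b₃ - 1 + θ + k) * rG (b₃ - θ - k)) *
      (rG (b₄ - 1 + θ + k) * rG (b₄ - θ - k)))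

lemma Dec_GG (b₁ b₂ b₃ b₄ θ : ℂ) : Dec (6 - 2 * (b₁ + b₂ + b₃ + b₄).re) (GG b₁ b₂ b₃ b₄ θ) := by
  refine ((Dec_pair (b₁ + θ) (b₁ + 1 - θ)).mul (((Dec_pair (b₂ - 1 + θ) (b₂ - θ)).mul
    (Dec_pair (b₃ - 1 + θ) (b₃ - θ))).mul (Dec_pair (b₄ - 1 + θ) (b₄ - θ)))).congr_exp ?_
  simp; ring

lemma WZ (b₁ b₂ b₃ b₄ θ : ℂ) (k : ℤ) :
    GG b₁ b₂ b₃ b₄ θ (k + 1) - GG b₁ b₂ b₃ b₄ θ k =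
    2 * ((b₁ + b₂ + b₃ + b₄ - 3) * TT b₁ b₂ b₃ b₄ θ k -
      (b₁ + b₂ - 1) * (b₁ + b₃ - 1) * (b₁ + b₄ - 1) * TT (b₁ + 1) b₂ b₃ b₄ θ k) := by
  have hp : ∀ b : ℂ, rG (b - 1 + θ + k) = (b - 1 + θ + k) * rG (b + θ + k) := fun b => by
    rw [rG_rec]; ring_nf
  have hq : ∀ b : ℂ, rG (b - θ - (k + 1)) = (b - 1 - θ - k) * rG (b - θ - k) := fun b => by
    rw [rG_rec]; ring_nf
  have h1 : rG (b₁ + θ + k) = (b₁ + θ + k) * rG (b₁ + 1 + θ + k) := by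
    rw [rG_rec]; ring_nf
  have h2 : rG (b₁ - θ - k) = (b₁ - θ - k) * rG (b₁ + 1 - θ - k) := by
    rw [rG_rec]; ring_nf
  have h3 : ∀ b : ℂ, b - 1 + θ + (k + 1) = b + θ + k := fun b => by ring
  have h4 : b₁ + θ + ((k : ℂ) + 1) = b₁ + 1 + θ + k := by ring
  have h5 : b₁ + 1 - θ - ((k : ℂ) + 1) = b₁ - θ - k := by ring
  unfold GG TT T3 vv
  push_cast
  simp only [hp, hq, h3, h4, h5]
  rw [h1, h2]
  ring

lemma SS_rec (b₁ b₂ b₃ b₄ θ : ℂ) (h : 3 < (b₁ + b₂ + b₃ + b₄).re) :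
    (b₁ + b₂ + b₃ + b₄ - 3) * SS b₁ b₂ b₃ b₄ θ =
      (b₁ + b₂ - 1) * (b₁ + b₃ - 1) * (b₁ + b₄ - 1) * SS (b₁ + 1) b₂ b₃ b₄ θ := by
  have s1 := summable_TT b₁ b₂ b₃ b₄ θ h
  have s2 := summable_TT (b₁ + 1) b₂ b₃ b₄ θ (by simp at h ⊢; linarith)
  have s3 := ((s1.mul_left (b₁ + b₂ + b₃ + b₄ - 3)).sub
    (s2.mul_left ((b₁ + b₂ - 1) * (b₁ + b₃ - 1) * (b₁ + b₄ - 1))))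
  have s4 := (s3.mul_left 2).congr (fun k => (WZ b₁ b₂ b₃ b₄ θ k).symm)
  have t := tsum_telescope _ (Dec_GG b₁ b₂ b₃ b₄ θ) (by linarith) s4
  simp only [WZ] at t
  rw [tsum_mul_left, (s1.mul_left _).tsum_sub (s2.mul_left _), tsum_mul_left, tsum_mul_left] at t
  unfold SS
  linear_combination t / 2

lemma FF_rec (b₁ b₂ b₃ b₄ : ℂ) (h : 3 < (b₁ + b₂ + b₃ + b₄).re) :
    (b₁ + b₂ + b₃ + b₄ - 3) * FF b₁ b₂ b₃ b₄ =
      (b₁ + b₂ - 1) * (b₁ + b₃ - 1) * (b₁ + b₄ - 1) * FF (b₁ + 1) b₂ b₃ b₄ := by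
  have h0 : b₁ + b₂ + b₃ + b₄ - 3 ≠ 0 := by
    intro h0; have := congrArg Complex.re h0; simp at this h; linarith
  have e := Complex.Gamma_add_one _ h0
  have hr : ∀ b : ℂ, rG (b₁ + b - 1) = (b₁ + b - 1) * rG (b₁ + 1 + b - 1) := fun b => by
    rw [rG_rec]; ring_nf
  unfold FF
  rw [show b₁ + 1 + b₂ + b₃ + b₄ - 3 = b₁ + b₂ + b₃ + b₄ - 3 + 1 by ring, e, hr, hr, hr]
  ring

lemma TT_swap (b₁ b₂ b₃ b₄ θ : ℂ) : SS b₁ b₂ b₃ b₄ θ = SS b₂ b₁ b₃ b₄ θ := by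
  unfold SS; congr 1; ext k; unfold TT T3; ring

/-- the claim -/
def PP (b₁ b₂ b₃ b₄ θ : ℂ) : Prop :=
  SS b₁ b₂ b₃ b₄ θ = Complex.sin (2 * (π : ℂ) * θ) / (2 * (π : ℂ)) * FF b₁ b₂ b₃ b₄

def P3 (b₂ b₃ b₄ θ : ℂ) : Prop :=
  S3 b₂ b₃ b₄ θ = Complex.sin (2 * (π : ℂ) * θ) / (2 * (π : ℂ)) * F3 b₂ b₃ b₄

lemma PP.swap12 {b₁ b₂ b₃ b₄ θ : ℂ} (h : PP b₁ b₂ b₃ b₄ θ) : PP b₂ b₁ b₃ b₄ θ := by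
  have e1 : SS b₂ b₁ b₃ b₄ θ = SS b₁ b₂ b₃ b₄ θ := by
    unfold SS; congr 1; ext k; unfold TT T3; ring
  have e2 : FF b₂ b₁ b₃ b₄ = FF b₁ b₂ b₃ b₄ := by
    unfold FF F3; rw [add_comm b₂ b₁]; ring
  unfold PP at *
  rw [e1, e2]; exact h

lemma PP.rot {b₁ b₂ b₃ b₄ θ : ℂ} (h : PP b₁ b₂ b₃ b₄ θ) : PP b₂ b₃ b₄ b₁ θ := by
  have e1 : SS b₂ b₃ b₄ b₁ θ = SS b₁ b₂ b₃ b₄ θ := by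
    unfold SS; congr 1; ext k; unfold TT T3; ring
  have e2 : FF b₂ b₃ b₄ b₁ = FF b₁ b₂ b₃ b₄ := by
    unfold FF F3
    rw [add_comm b₂ b₁, add_comm b₃ b₁, add_comm b₄ b₁,
      show b₂ + b₃ + b₄ + b₁ = b₁ + b₂ + b₃ + b₄ by ring]; ring
  unfold PP at *
  rw [e1, e2]; exact h

lemma PP.down {b₁ b₂ b₃ b₄ θ : ℂ} (hb : 3 < (b₁ + b₂ + b₃ + b₄).re)
    (h : PP (b₁ + 1) b₂ b₃ b₄ θ) : PP b₁ b₂ b₃ b₄ θ := by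
  have h0 : b₁ + b₂ + b₃ + b₄ - 3 ≠ 0 := by
    intro h0; have := congrArg Complex.re h0; simp at this hb; linarith
  unfold PP at *
  apply mul_left_cancel₀ h0
  have h1 := SS_rec b₁ b₂ b₃ b₄ θ hb
  have h2 := FF_rec b₁ b₂ b₃ b₄ hb
  rw [h] at h1
  linear_combination h1 - Complex.sin (2 * (π : ℂ) * θ) / (2 * (π : ℂ)) * h2

lemma PP.down_nat {b₂ b₃ b₄ θ : ℂ} (m : ℕ) : ∀ {b₁ : ℂ}, 3 < (b₁ + b₂ + b₃ + b₄).re →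
    PP (b₁ + m) b₂ b₃ b₄ θ → PP b₁ b₂ b₃ b₄ θ := by
  induction m with
  | zero => intro b₁ _ h; simpa using h
  | succ m ih =>
    intro b₁ hb h
    apply PP.down hb
    apply ih (by simp at hb ⊢; linarith)
    convert h using 1
    push_cast; ring

lemma PP.down_all {b₁ b₂ b₃ b₄ θ : ℂ} (m₁ m₂ m₃ m₄ : ℕ) (hb : 3 < (b₁ + b₂ + b₃ + b₄).re)
    (h : PP (b₁ + m₁) (b₂ + m₂) (b₃ + m₃) (b₄ + m₄) θ) : PP b₁ b₂ b₃ b₄ θ := by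
  have k1 : (0 : ℝ) ≤ m₁ := Nat.cast_nonneg _
  have k2 : (0 : ℝ) ≤ m₂ := Nat.cast_nonneg _
  have k3 : (0 : ℝ) ≤ m₃ := Nat.cast_nonneg _
  have k4 : (0 : ℝ) ≤ m₄ := Nat.cast_nonneg _
  simp at hb
  have h1 := (PP.down_nat m₁ (by simp; linarith) h).rot
  have h2 := (PP.down_nat m₂ (by simp; linarith) h1).rot
  have h3 := (PP.down_nat m₃ (by simp; linarith) h2).rot
  exact (PP.down_nat m₄ (by simp; linarith) h3).rot

noncomputable def cN (b : ℂ) (N : ℕ) : ℂ := (N.factorial : ℂ) ^ 2 * (N : ℂ) ^ (2 * b - 2)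

lemma cN_vv (b θ : ℂ) (k : ℤ) {N : ℕ} (hN : N ≠ 0) :
    cN b N * vv (b + N) θ k = aA (b + θ + k) N * aA (b - θ - k) N := by
  have h : (N : ℂ) ≠ 0 := by exact_mod_cast hN
  unfold cN vv aA
  rw [show 2 * b - 2 = (b + θ + k - 1) + (b - θ - k - 1) by ring, Complex.cpow_add _ _ h,
    show b + N + θ + k = b + θ + k + N by ring, show b + N - θ - k = b - θ - k + N by ring]
  ring

lemma cN_vv_tendsto (b θ : ℂ) (k : ℤ) :
    Tendsto (fun N : ℕ => cN b N * vv (b + N) θ k) atTop (𝓝 1) := by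
  have h := (aA_tendsto (b + θ + k)).mul (aA_tendsto (b - θ - k))
  rw [one_mul] at h
  refine h.congr' ?_
  filter_upwards [eventually_ne_atTop 0] with N hN
  exact (cN_vv b θ k hN).symm

lemma vv_neg (b θ : ℂ) (k : ℤ) : vv b θ (-k) = vv b (-θ) k := by
  unfold vv; push_cast; rw [mul_comm]; ring_nf

lemma vv_step (b θ : ℂ) (k : ℤ) :
    (b + θ + k) * vv b θ (k + 1) = (b - 1 - θ - k) * vv b θ k := by
  have hp : rG (b + θ + k) = (b + θ + k) * rG (b + θ + (k + 1)) := by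
    rw [rG_rec]; ring_nf
  have hq : rG (b - θ - (k + 1)) = (b - 1 - θ - k) * rG (b - θ - k) := by
    rw [rG_rec]; ring_nf
  unfold vv
  push_cast
  rw [hp, hq]; ring

lemma vv_growth (b θ : ℂ) : ∃ A : ℕ, ∀ N : ℕ, A + 1 ≤ N → ∀ k : ℕ,
    ‖vv (b + N) θ k‖ ≤ ‖vv (b + N) θ 0‖ * (1 + (k : ℝ)) ^ (2 * A) := by
  obtain ⟨R, hR⟩ := exists_nat_gt (‖b - 1 - θ‖ + ‖b + θ‖)
  refine ⟨R, fun N hN k => ?_⟩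
  have n1 := norm_nonneg (b - 1 - θ)
  have n2 := norm_nonneg (b + θ)
  have hN' : (R : ℝ) + 1 ≤ N := by exact_mod_cast hN
  induction k with
  | zero => simp
  | succ k ih =>
    have hs := congrArg norm (vv_step (b + N) θ k)
    rw [norm_mul, norm_mul] at hs
    have hk : (0 : ℝ) ≤ k := Nat.cast_nonneg _
    have hk1 : (0 : ℝ) < 1 + k := by linarith
    have l1 : (N : ℝ) + k - R ≤ ‖b + N + θ + ((k : ℤ) : ℂ)‖ := by
      have := norm_sub_norm_le ((N + k : ℕ) : ℂ) (-(b + θ))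
      rw [Complex.norm_natCast, norm_neg] at this
      push_cast at this ⊢
      rw [show b + N + θ + (k : ℂ) = N + k - -(b + θ) by ring]
      linarith
    have l2 : ‖b + N - 1 - θ - ((k : ℤ) : ℂ)‖ ≤ (N : ℝ) + k + R := by
      push_cast
      rw [show b + N - 1 - θ - (k : ℂ) = (b - 1 - θ) + (N - k) by ring]
      have t1 := norm_add_le (b - 1 - θ) ((N : ℂ) - k)
      have t2 := norm_sub_le (N : ℂ) (k : ℂ)
      rw [Complex.norm_natCast, Complex.norm_natCast] at t2
      linarith
    have hpos : (0 : ℝ) < N + k - R := by linarith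
    have bern : 1 + ((2 * R : ℕ) : ℝ) * (1 / (1 + k)) ≤ (1 + 1 / (1 + (k : ℝ))) ^ (2 * R) :=
      one_add_mul_le_pow (by have : (0 : ℝ) ≤ 1 / (1 + k) := by positivity
                             linarith) _
    have l3 : (N : ℝ) + k + R ≤ (N + k - R) * (1 + 1 / (1 + (k : ℝ))) ^ (2 * R) := by
      have : (N : ℝ) + k + R ≤ (N + k - R) * (1 + ((2 * R : ℕ) : ℝ) * (1 / (1 + k))) := by
        have h5 : (1 : ℝ) ≤ (N + k - R) * (1 / (1 + k)) := by
          rw [mul_one_div, le_div_iff₀ hk1]; linarith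
        push_cast
        have hR0 : (0 : ℝ) ≤ R := Nat.cast_nonneg _
        nlinarith
      exact this.trans (mul_le_mul_of_nonneg_left bern hpos.le)
    have hv : ‖vv (b + N) θ ((k : ℤ) + 1)‖ ≤
        ‖vv (b + N) θ k‖ * (1 + 1 / (1 + (k : ℝ))) ^ (2 * R) := by
      refine le_of_mul_le_mul_left ?_ hpos
      calc _ ≤ ‖b + N + θ + ((k : ℤ) : ℂ)‖ * ‖vv (b + N) θ ((k : ℤ) + 1)‖ := by gcongr
        _ = _ := hs
        _ ≤ ((N : ℝ) + k + R) * ‖vv (b + N) θ k‖ := by gcongr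
        _ ≤ ((N + k - R) * (1 + 1 / (1 + (k : ℝ))) ^ (2 * R)) * ‖vv (b + N) θ k‖ := by gcongr
        _ = _ := by ring
    push_cast
    refine hv.trans ((mul_le_mul_of_nonneg_right ih (by positivity)).trans (le_of_eq ?_))
    rw [mul_assoc, ← mul_pow]
    congr 2
    field_simp
    ring

lemma vv_bound (b θ : ℂ) : ∃ A : ℕ, ∀ᶠ N : ℕ in atTop, ∀ k : ℤ,
    ‖cN b N * vv (b + N) θ k‖ ≤ 2 * (1 + (k.natAbs : ℝ)) ^ A := by
  obtain ⟨A₁, h₁⟩ := vv_growth b θ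
  obtain ⟨A₂, h₂⟩ := vv_growth b (-θ)
  refine ⟨2 * A₁ + 2 * A₂, ?_⟩
  have ht := (cN_vv_tendsto b θ 0).norm
  rw [norm_one] at ht
  filter_upwards [eventually_ge_atTop (A₁ + 1), eventually_ge_atTop (A₂ + 1),
    ht.eventually_le_const (show (1 : ℝ) < 2 by norm_num)] with N n1 n2 n3 k
  have hb : (1 : ℝ) ≤ 1 + (k.natAbs : ℝ) := by
    have : (0 : ℝ) ≤ (k.natAbs : ℝ) := Nat.cast_nonneg _
    linarith
  rw [norm_mul] at n3 ⊢
  have key : ‖vv (b + N) θ k‖ ≤ ‖vv (b + N) θ 0‖ * (1 + (k.natAbs : ℝ)) ^ (2 * A₁ + 2 * A₂) := by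
    rcases Int.natAbs_eq k with hk | hk
    · have := h₁ N n1 k.natAbs
      rw [← hk] at this
      refine this.trans (mul_le_mul_of_nonneg_left ?_ (norm_nonneg _))
      exact pow_le_pow_right₀ hb (by omega)
    · have := h₂ N n2 k.natAbs
      rw [← vv_neg, ← hk, ← vv_neg, neg_zero] at this
      refine this.trans (mul_le_mul_of_nonneg_left ?_ (norm_nonneg _))
      exact pow_le_pow_right₀ hb (by omega)
  calc _ ≤ ‖cN b N‖ * (‖vv (b + N) θ 0‖ * (1 + (k.natAbs : ℝ)) ^ (2 * A₁ + 2 * A₂)) := by gcongr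
    _ = (‖cN b N‖ * ‖vv (b + N) θ 0‖) * (1 + (k.natAbs : ℝ)) ^ (2 * A₁ + 2 * A₂) := by ring
    _ ≤ _ := by gcongr

lemma SS_lim (b θ : ℂ) : ∃ B : ℝ, ∀ b₂ b₃ b₄ : ℂ, B < (b₂ + b₃ + b₄).re →
    Tendsto (fun N : ℕ => cN b N * SS (b + N) b₂ b₃ b₄ θ) atTop (𝓝 (S3 b₂ b₃ b₄ θ)) := by
  obtain ⟨A, hA⟩ := vv_bound b θ
  refine ⟨(A + 5) / 2, fun b₂ b₃ b₄ hB => ?_⟩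
  have hs : Summable (fun k : ℤ => (1 + (k.natAbs : ℂ)) ^ A * T3 b₂ b₃ b₄ θ k) :=
    ((Dec_pow A).mul (Dec_T3 b₂ b₃ b₄ θ)).summable (by linarith)
  have hs2 := (hs.norm.mul_left 2)
  unfold SS S3
  simp only [← tsum_mul_left]
  refine tendsto_tsum_of_dominated_convergence hs2 ?_ ?_
  · intro k
    have := (cN_vv_tendsto b θ k).mul_const (T3 b₂ b₃ b₄ θ k)
    rw [one_mul] at this
    refine this.congr ?_
    intro N; unfold TT; ring
  · filter_upwards [hA] with N hN k
    unfold TT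
    rw [← mul_assoc, norm_mul, norm_mul (_ ^ A), ← mul_assoc, norm_pow]
    have e : ‖1 + (k.natAbs : ℂ)‖ = 1 + (k.natAbs : ℝ) := by
      have := Complex.norm_natCast (1 + k.natAbs)
      push_cast at this
      exact_mod_cast this
    rw [e]
    exact mul_le_mul_of_nonneg_right (hN k) (norm_nonneg _)

lemma FF_lim (b b₂ b₃ b₄ : ℂ) :
    Tendsto (fun N : ℕ => cN b N * FF (b + N) b₂ b₃ b₄) atTop (𝓝 (F3 b₂ b₃ b₄)) := by
  have h := ((((aA_tendsto (b + b₂ - 1)).mul (aA_tendsto (b + b₃ - 1))).mul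
    (aA_tendsto (b + b₄ - 1))).div (aA_tendsto (b + b₂ + b₃ + b₄ - 3)) one_ne_zero).mul_const
      (F3 b₂ b₃ b₄)
  simp only [one_mul, div_one, Pi.div_apply] at h
  refine h.congr' ?_
  filter_upwards [eventually_ne_atTop 0] with N hN
  have h0 : (N : ℂ) ≠ 0 := by exact_mod_cast hN
  have hf : (N.factorial : ℂ) ≠ 0 := by exact_mod_cast N.factorial_ne_zero
  have hc : ∀ s : ℂ, (N : ℂ) ^ s ≠ 0 := fun s => by simp [Complex.cpow_eq_zero_iff, h0]
  have e1 : cN b N * (N.factorial * (N : ℂ) ^ (b + b₂ + b₃ + b₄ - 3 - 1)) =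
      (N.factorial : ℂ) ^ 3 * ((N : ℂ) ^ (b + b₂ - 1 - 1) * (N : ℂ) ^ (b + b₃ - 1 - 1) *
        (N : ℂ) ^ (b + b₄ - 1 - 1)) := by
    unfold cN
    rw [← Complex.cpow_add _ _ h0, ← Complex.cpow_add _ _ h0,
      show b + b₂ - 1 - 1 + (b + b₃ - 1 - 1) + (b + b₄ - 1 - 1) =
        (2 * b - 2) + (b + b₂ + b₃ + b₄ - 3 - 1) by ring, Complex.cpow_add _ _ h0]
    ring
  have e2 : cN b N = (N.factorial : ℂ) ^ 3 * ((N : ℂ) ^ (b + b₂ - 1 - 1) *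
      (N : ℂ) ^ (b + b₃ - 1 - 1) * (N : ℂ) ^ (b + b₄ - 1 - 1)) /
        (N.factorial * (N : ℂ) ^ (b + b₂ + b₃ + b₄ - 3 - 1)) := by
    rw [eq_div_iff (mul_ne_zero hf (hc _)), e1]
  rw [e2]
  unfold FF aA
  have e3 : ∀ c : ℂ, b + N + c - 1 = b + c - 1 + N := fun c => by ring
  rw [e3, e3, e3, show b + N + b₂ + b₃ + b₄ - 3 = b + b₂ + b₃ + b₄ - 3 + N by ring]
  have e4 : Complex.Gamma (b + b₂ + b₃ + b₄ - 3 + N) = (rG (b + b₂ + b₃ + b₄ - 3 + N))⁻¹ := by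
    simp [rG]
  rw [e4]
  simp only [div_eq_mul_inv, mul_inv]
  ring

/-- region -/
structure Reg (b₁ b₂ b₃ b₄ : ℂ) : Prop where
  hs : 3 < (b₁ + b₂ + b₃ + b₄).re
  h12 : 1 < (b₁ + b₂).re
  h13 : 1 < (b₁ + b₃).re
  h14 : 1 < (b₁ + b₄).re
  h23 : 1 < (b₂ + b₃).re
  h24 : 1 < (b₂ + b₄).re
  h34 : 1 < (b₃ + b₄).re

lemma Reg.F3_ne {b₁ b₂ b₃ b₄ : ℂ} (h : Reg b₁ b₂ b₃ b₄) : F3 b₂ b₃ b₄ ≠ 0 := by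
  have := h.h23; have := h.h24; have := h.h34
  unfold F3
  refine mul_ne_zero (mul_ne_zero (rG_ne ?_) (rG_ne ?_)) (rG_ne ?_) <;> simp at * <;> linarith

lemma Reg.FF_ne {b₁ b₂ b₃ b₄ : ℂ} (h : Reg b₁ b₂ b₃ b₄) : FF b₁ b₂ b₃ b₄ ≠ 0 := by
  have hF := h.F3_ne
  have := h.h12; have := h.h13; have := h.h14; have := h.hs
  unfold FF
  refine mul_ne_zero (mul_ne_zero (Complex.Gamma_ne_zero_of_re_pos ?_)
    (mul_ne_zero (mul_ne_zero (rG_ne ?_) (rG_ne ?_)) (rG_ne ?_))) hF <;> simp at * <;> linarith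

lemma Reg.cross {b₁ b₂ b₃ b₄ : ℂ} (h : Reg b₁ b₂ b₃ b₄) (θ : ℂ) (N : ℕ) :
    SS (b₁ + N) b₂ b₃ b₄ θ * FF b₁ b₂ b₃ b₄ = SS b₁ b₂ b₃ b₄ θ * FF (b₁ + N) b₂ b₃ b₄ := by
  induction N with
  | zero => simp
  | succ N ih =>
    have k1 : (0 : ℝ) ≤ N := Nat.cast_nonneg _
    have h1 := h.hs; have h2 := h.h12; have h3 := h.h13; have h4 := h.h14
    simp at h1 h2 h3 h4
    have hN : 3 < (b₁ + N + b₂ + b₃ + b₄).re := by simp; linarith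
    have r1 := SS_rec (b₁ + N) b₂ b₃ b₄ θ hN
    have r2 := FF_rec (b₁ + N) b₂ b₃ b₄ hN
    have hne : ∀ b : ℂ, 1 < b₁.re + b.re → b₁ + N + b - 1 ≠ 0 := by
      intro b hb h0
      have := congrArg Complex.re h0
      simp at this; linarith
    have hp := mul_ne_zero (mul_ne_zero (hne _ h2) (hne _ h3)) (hne _ h4)
    apply mul_left_cancel₀ hp
    push_cast
    rw [← add_assoc]
    linear_combination (-(FF b₁ b₂ b₃ b₄)) * r1 + (SS b₁ b₂ b₃ b₄ θ) * r2 +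
      (b₁ + N + b₂ + b₃ + b₄ - 3) * ih

lemma S3_cross (b θ : ℂ) : ∃ B : ℝ, ∀ b₂ b₃ b₄ : ℂ, B < (b₂ + b₃ + b₄).re → Reg b b₂ b₃ b₄ →
    S3 b₂ b₃ b₄ θ * FF b b₂ b₃ b₄ = SS b b₂ b₃ b₄ θ * F3 b₂ b₃ b₄ := by
  obtain ⟨B, hB⟩ := SS_lim b θ
  refine ⟨B, fun b₂ b₃ b₄ h hr => ?_⟩
  have l1 := (hB b₂ b₃ b₄ h).mul_const (FF b b₂ b₃ b₄)
  have l2 := (FF_lim b b₂ b₃ b₄).const_mul (SS b b₂ b₃ b₄ θ)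
  refine tendsto_nhds_unique l1 (l2.congr ?_)
  intro N
  linear_combination (-(cN b N)) * hr.cross θ N

lemma PP_iff_P3 (b θ : ℂ) : ∃ B : ℝ, ∀ b₂ b₃ b₄ : ℂ, B < (b₂ + b₃ + b₄).re → Reg b b₂ b₃ b₄ →
    (PP b b₂ b₃ b₄ θ ↔ P3 b₂ b₃ b₄ θ) := by
  obtain ⟨B, hB⟩ := S3_cross b θ
  refine ⟨B, fun b₂ b₃ b₄ h hr => ?_⟩
  have hc := hB b₂ b₃ b₄ h hr
  unfold PP P3
  constructor
  · intro hp
    apply mul_right_cancel₀ hr.FF_ne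
    rw [hc, hp]; ring
  · intro hp
    apply mul_right_cancel₀ hr.F3_ne
    rw [← hc, hp]; ring

lemma special_const {θ : ℂ} (hθ : θ ≠ 0) :
    θ * (rG (1 + 2 * θ) * rG (1 - 2 * θ)) = Complex.sin (2 * (π : ℂ) * θ) / (2 * (π : ℂ)) := by
  have h := Complex.Gamma_mul_Gamma_one_sub (2 * θ)
  have h2 : rG (2 * θ) * rG (1 - 2 * θ) = Complex.sin (π * (2 * θ)) / π := by
    unfold rG; rw [← mul_inv, h, inv_div]
  rw [rG_rec, add_comm (2 * θ) 1] at h2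
  rw [show 2 * (π : ℂ) * θ = π * (2 * θ) by ring]
  have hpi : (π : ℂ) ≠ 0 := by exact_mod_cast Real.pi_ne_zero
  have h3 : Complex.sin (π * (2 * θ)) / (2 * π) = Complex.sin (π * (2 * θ)) / π / 2 := by
    field_simp
  rw [h3, ← h2]; ring

lemma rG_zero_of_nonpos {k : ℤ} (hk : k ≤ 0) : rG (k : ℂ) = 0 := by
  obtain ⟨n, rfl⟩ : ∃ n : ℕ, k = -(n : ℤ) := ⟨k.natAbs, by omega⟩
  unfold rG
  push_cast
  rw [Complex.Gamma_neg_nat_eq_zero, inv_zero]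

lemma special {θ : ℂ} (hθ : θ ≠ 0) (c d : ℂ) (h : 1 < (c + d).re) :
    PP (1 + θ) (1 - θ) c d θ := by
  have hz : ∀ k : ℤ, k ≠ 0 → TT (1 + θ) (1 - θ) c d θ k = 0 := by
    intro k hk
    unfold TT T3 vv
    rcases lt_or_gt_of_ne hk with hk | hk
    · have : rG (1 - θ + θ + k) = 0 := by
        rw [show 1 - θ + θ + (k : ℂ) = ((1 + k : ℤ) : ℂ) by push_cast; ring]
        exact rG_zero_of_nonpos (by omega)
      rw [this]; ring
    · have : rG (1 + θ - θ - k) = 0 := by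
        rw [show 1 + θ - θ - (k : ℂ) = ((1 - k : ℤ) : ℂ) by push_cast; ring]
        exact rG_zero_of_nonpos (by omega)
      rw [this]; ring
  unfold PP SS
  rw [tsum_eq_single 0 hz, ← special_const hθ]
  have hG : Complex.Gamma (c + d - 1) * rG (c + d - 1) = 1 := by
    unfold rG
    exact mul_inv_cancel₀ (Complex.Gamma_ne_zero_of_re_pos (by simp at h ⊢; linarith))
  have h1 : rG 1 = 1 := by simp [rG]
  unfold TT T3 vv FF F3
  rw [show 1 + θ + (1 - θ) + c + d - 3 = c + d - 1 by ring,
    show 1 + θ + (1 - θ) - 1 = 1 by ring,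
    show 1 + θ + c - 1 = c + θ by ring, show 1 + θ + d - 1 = d + θ by ring,
    show 1 - θ + c - 1 = c - θ by ring, show 1 - θ + d - 1 = d - θ by ring]
  push_cast
  rw [show 1 + θ + θ + 0 = 1 + 2 * θ by ring, show 1 + θ - θ - 0 = 1 by ring,
    show 1 - θ + θ + 0 = 1 by ring, show 1 - θ - θ - 0 = 1 - 2 * θ by ring]
  simp only [add_zero, sub_zero, zero_add, h1]
  linear_combination (-(θ * (rG (1 + 2 * θ) * rG (1 - 2 * θ)) * rG (c + θ) * rG (d + θ) *
    rG (c - θ) * rG (d - θ))) * hG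

lemma main_PP {b₁ b₂ b₃ b₄ θ : ℂ} (hθ : θ ≠ 0) (hb : 3 < (b₁ + b₂ + b₃ + b₄).re) :
    PP b₁ b₂ b₃ b₄ θ := by
  obtain ⟨m₁, hm₁⟩ := exists_nat_gt (θ.re - b₁.re)
  obtain ⟨m₂, hm₂⟩ := exists_nat_gt (1 - b₁.re - m₁ - b₂.re)
  obtain ⟨B₁, hB₁⟩ := PP_iff_P3 (1 + θ) θ
  obtain ⟨B₂, hB₂⟩ := PP_iff_P3 (b₁ + m₁) θ
  obtain ⟨B₃, hB₃⟩ := PP_iff_P3 (1 - θ) θ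
  obtain ⟨B₄, hB₄⟩ := PP_iff_P3 (b₂ + m₂) θ
  obtain ⟨M, hM⟩ := exists_nat_gt (|B₁| + |B₂| + |B₃| + |B₄| + 10 + |θ.re| + |b₁.re| + |b₂.re| +
    |b₃.re| + |b₄.re| + m₁ + m₂)
  have k1 : (0 : ℝ) ≤ m₁ := Nat.cast_nonneg _
  have k2 : (0 : ℝ) ≤ m₂ := Nat.cast_nonneg _
  have a1 := neg_abs_le θ.re; have a1' := le_abs_self θ.re
  have a2 := neg_abs_le b₁.re; have a3 := neg_abs_le b₂.re
  have a4 := neg_abs_le b₃.re; have a5 := neg_abs_le b₄.re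
  have c1 := le_abs_self B₁; have c2 := le_abs_self B₂
  have c3 := le_abs_self B₃; have c4 := le_abs_self B₄
  have d1 := abs_nonneg B₁; have d2 := abs_nonneg B₂
  have d3 := abs_nonneg B₃; have d4 := abs_nonneg B₄
  have f1 := abs_nonneg θ.re; have f2 := abs_nonneg b₁.re; have f3 := abs_nonneg b₂.re
  have f4 := abs_nonneg b₃.re; have f5 := abs_nonneg b₄.re
  refine PP.down_all m₁ m₂ M M hb ?_
  have s0 : PP (1 + θ) (1 - θ) (b₃ + M) (b₄ + M) θ := special hθ _ _ (by simp; linarith)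
  have s1 := (hB₁ (1 - θ) (b₃ + M) (b₄ + M) (by simp; linarith)
    (by constructor <;> simp <;> linarith)).mp s0
  have s2 := ((hB₂ (1 - θ) (b₃ + M) (b₄ + M) (by simp; linarith)
    (by constructor <;> simp <;> linarith)).mpr s1).swap12
  have s3 := (hB₃ (b₁ + m₁) (b₃ + M) (b₄ + M) (by simp; linarith)
    (by constructor <;> simp <;> linarith)).mp s2
  exact ((hB₄ (b₁ + m₁) (b₃ + M) (b₄ + M) (by simp; linarith)
    (by constructor <;> simp <;> linarith)).mpr s3).swap12

/-- the Dougall bilateral `₅H₅` formula: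
`∑_{k∈ℤ} (k+θ)/∏_{α=1}^4 Γ(b_α+θ+k)Γ(b_α-θ-k)
  = (sin 2πθ)/(2π) · Γ(b₁+b₂+b₃+b₄-3)/∏_{α<β} Γ(b_α+b_β-1)`
for `Re(b₁+b₂+b₃+b₄) > 3` and `θ` not an integer. -/
theorem dougall_5H5 (b₁ b₂ b₃ b₄ θ : ℂ) (hb : 3 < (b₁ + b₂ + b₃ + b₄).re)
    (hθ : ∀ m : ℤ, θ ≠ (m : ℂ)) :
    (∑' k : ℤ, ((k : ℂ) + θ) /
      (Complex.Gamma (b₁ + θ + k) * Complex.Gamma (b₁ - θ - k) *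
        (Complex.Gamma (b₂ + θ + k) * Complex.Gamma (b₂ - θ - k)) *
        (Complex.Gamma (b₃ + θ + k) * Complex.Gamma (b₃ - θ - k)) *
        (Complex.Gamma (b₄ + θ + k) * Complex.Gamma (b₄ - θ - k)))) =
      Complex.sin (2 * (π : ℂ) * θ) / (2 * (π : ℂ)) *
        (Complex.Gamma (b₁ + b₂ + b₃ + b₄ - 3) /
          (Complex.Gamma (b₁ + b₂ - 1) * Complex.Gamma (b₁ + b₃ - 1) *
            Complex.Gamma (b₁ + b₄ - 1) * Complex.Gamma (b₂ + b₃ - 1) *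
            Complex.Gamma (b₂ + b₄ - 1) * Complex.Gamma (b₃ + b₄ - 1))) := by
  have hθ0 : θ ≠ 0 := by simpa using hθ 0
  have h := main_PP hθ0 hb
  unfold PP SS at h
  convert h using 1
  · congr 1
    ext k
    unfold TT T3 vv rG
    simp only [div_eq_mul_inv, mul_inv]
    ring
  · unfold FF F3 rG
    simp only [div_eq_mul_inv, mul_inv]
    ring
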